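/- Let p_1, q_1, …, p_k, q_k be real bivariate polynomials, each (d,C)-bounded, satisfying the formal polynomial identity p_1(x,y)q_1(x,y) + ⋯ + p_k(x,y)q_k(x,y) = 0. Let X, Y be n×n Hermitian complex matrices and ρ, A, B arbitrary n×n complex matrices. Then there exist a natural number t ≤ 4kd^6, real coefficients c_1, …, c_t with |c_i| ≤ C^2·2^{2d}, and complex numbers Z_1, …, Z_t, such that tr((p_1(X,Y|A)q_1(X,Y|B)† + ⋯ + p_k(X,Y|A)q_k(X,Y|B)†)·ρ) = ∑_{i=1}^{t} c_i Z_i, where every Z_i has one of the following three forms for some sequences S, T ∈ {0,1}^* with len(S) + len(T) ≤ 2d: (1) ±(1/((len(S)+len(T))!))·tr([(X,Y)_S, A]·[(X,Y)_T, B]†·[X,ρ]); (2) ±(1/((len(S)+len(T))!))·tr([(X,Y)_S, A]·[(X,Y)_T, B]†·[Y,ρ]); (3) ±(1/((len(S)+len(T))!))·tr(A·[(X,Y)_S, [[X,Y], [(X,Y)_T, B]]]†·ρ). -/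

import Mathlib

open scoped BigOperators Matrix

/-- The total degree of a monomial (exponent vector). -/
def monomialDeg {σ : Type*} (m : σ →₀ ℕ) : ℕ := m.sum fun _ e => e

/-- A multivariate real polynomial is `(d, C)`-bounded if it has (total) degree at most
`d` and every coefficient of a monomial of degree `d' ≤ d` has magnitude at most `C/d'!`. -/
def MvBounded {σ : Type*} (d : ℕ) (C : ℝ) (f : MvPolynomial σ ℝ) : Prop :=
  f.totalDegree ≤ d ∧
  ∀ m : σ →₀ ℕ, monomialDeg m ≤ d →
    |MvPolynomial.coeff m f| ≤ C / (Nat.factorial (monomialDeg m) : ℝ)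

/-- The commutator `[M, N] = MN - NM`. -/
noncomputable def matComm {n : ℕ} (M N : Matrix (Fin n) (Fin n) ℂ) : Matrix (Fin n) (Fin n) ℂ :=
  M * N - N * M

/-- The nested commutator `[A, B]_k`, with `[A, B]_0 = B` and
`[A, B]_{k+1} = [A, [A, B]_k]`. -/
noncomputable def nestedComm {n : ℕ} (A B : Matrix (Fin n) (Fin n) ℂ) : ℕ → Matrix (Fin n) (Fin n) ℂ
  | 0 => B
  | k + 1 => A * nestedComm A B k - nestedComm A B k * A

/-- The bivariate nested commutator `[(X,Y)_S, A]` for `S ∈ {0,1}^ℓ` (encoded as a list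
of booleans, `false` for `0` and `true` for `1`). -/
noncomputable def commSeq {n : ℕ} (X Y : Matrix (Fin n) (Fin n) ℂ) :
    List Bool → Matrix (Fin n) (Fin n) ℂ → Matrix (Fin n) (Fin n) ℂ
  | [], A => A
  | b :: S, A => matComm (if b then Y else X) (commSeq X Y S A)

/-- The matrix commutator polynomial `p(X, Y | A) = ∑_{i+j≤d} a_{ij} [X, [Y, A]_j]_i`
associated to a real bivariate polynomial `p(x,y) = ∑ a_{ij} x^i y^j`. -/
noncomputable def mvCommPoly {n : ℕ} (f : MvPolynomial (Fin 2) ℝ)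
    (X Y A : Matrix (Fin n) (Fin n) ℂ) : Matrix (Fin n) (Fin n) ℂ :=
  ∑ m ∈ f.support,
    ((MvPolynomial.coeff m f : ℝ) : ℂ) • nestedComm X (nestedComm Y A (m 1)) (m 0)

/-!
Write `w_p` for the word `0^(p 0) 1^(p 1)`. Expanding, the trace is the sum over pairs of exponents
of `c_pq • tr([w_p, A] [w_q, B]† ρ)`, where `c_pq` is the coefficient of `x^p ⊗ x^q` in
`∑ i, P i ⊗ Q i`. If these traces depended only on `p + q`, the sum would vanish by the polynomial
identity. They do up to errors: the letters of `w_p` can be moved from `A` to `B` one at a time, at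
the cost of a trace with `[X, ρ]` or `[Y, ρ]` each, and the resulting word on `B` can be sorted into
`w_(p+q)` by the Jacobi identity, at the cost of a trace with `[X, Y]` per exchange.

An error from the pair `(p, q)` has total length `ℓ < |p| + |q|`, so `4 ℓ! ≤ 2^(2d) |p|! |q|!`. The
factor `4` leaves room to distribute `k` summands over only `⌊k/2⌋` terms if `k ≠ 1`, which the
count `4kd⁶` requires when `d = 1`; for `k = 1` one of the two polynomials is zero.
-/

/-- `z` is a sum of at most `t` elements of `s`, counted with repetition. This measures the number
of error terms produced by a chain of commutator manipulations. -/
def IsSumOfAtMost {E : Type*} [AddCommMonoid E] (t : ℕ) (s : Set E) (z : E) : Prop :=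
  ∃ r ≤ t, ∃ w : Fin r → E, (∀ i, w i ∈ s) ∧ ∑ i, w i = z

/-- The real multiples `c • v` with `|c| ≤ R` and `v ∈ V`. -/
def boundedMultiples {E : Type*} [AddCommGroup E] [Module ℝ E] (R : ℝ) (V : Set E) : Set E :=
  {z | ∃ c : ℝ, |c| ≤ R ∧ ∃ v ∈ V, z = c • v}

namespace IsSumOfAtMost

section AddCommMonoid

variable {E : Type*} [AddCommMonoid E] {s : Set E} {t u : ℕ} {y z : E}

lemma zero (t : ℕ) (s : Set E) : IsSumOfAtMost t s 0 :=
  ⟨0, t.zero_le, Fin.elim0, fun i => i.elim0, by simp⟩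

lemma of_mem (hz : z ∈ s) : IsSumOfAtMost 1 s z :=
  ⟨1, le_rfl, fun _ => z, fun _ => hz, by simp⟩

lemma mono (h : IsSumOfAtMost t s z) (htu : t ≤ u) : IsSumOfAtMost u s z :=
  let ⟨r, hr, hw⟩ := h
  ⟨r, hr.trans htu, hw⟩

lemma add (hy : IsSumOfAtMost t s y) (hz : IsSumOfAtMost u s z) :
    IsSumOfAtMost (t + u) s (y + z) := by
  obtain ⟨q, hq, v, hv, rfl⟩ := hy
  obtain ⟨r, hr, w, hw, rfl⟩ := hz
  refine ⟨q + r, add_le_add hq hr, Fin.append v w, fun i => ?_, by simp [Fin.sum_univ_add]⟩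
  induction i using Fin.addCases with
  | left i => simpa using hv i
  | right i => simpa using hw i

lemma sum {ι : Type*} {a : Finset ι} {t : ι → ℕ} {z : ι → E}
    (h : ∀ i ∈ a, IsSumOfAtMost (t i) s (z i)) :
    IsSumOfAtMost (∑ i ∈ a, t i) s (∑ i ∈ a, z i) := by
  induction a using Finset.cons_induction with
  | empty => exact zero _ _
  | cons i a hi ih =>
    rw [Finset.sum_cons, Finset.sum_cons]
    exact (h i (by simp)).add (ih fun j hj => h j (by simp [hj]))

lemma smul {R : Type*} [DistribSMul R E] {s' : Set E} {c : R} (hz : IsSumOfAtMost t s z)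
    (hs : ∀ v ∈ s, IsSumOfAtMost u s' (c • v)) : IsSumOfAtMost (t * u) s' (c • z) := by
  obtain ⟨r, hr, w, hw, rfl⟩ := hz
  rw [Finset.smul_sum]
  refine (sum fun i _ => hs (w i) (hw i)).mono ?_
  simpa using Nat.mul_le_mul_right u hr

end AddCommMonoid

lemma trans {E : Type*} [AddCommGroup E] {s : Set E} {t u : ℕ} {x y z : E}
    (hxy : IsSumOfAtMost t s (y - x)) (hyz : IsSumOfAtMost u s (z - y)) :
    IsSumOfAtMost (t + u) s (z - x) := by
  simpa using hxy.add hyz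

lemma smul_boundedMultiples {E : Type*} [AddCommGroup E] [Module ℝ E] {K : ℕ} {R c : ℝ}
    {V : Set E} {v : E} (hc : |c| ≤ K * R) (hv : v ∈ V) :
    IsSumOfAtMost K (boundedMultiples R V) (c • v) := by
  rcases K.eq_zero_or_pos with rfl | hK
  · obtain rfl : c = 0 := by simpa using hc
    simpa using zero 0 (boundedMultiples R V)
  have hK' : (0 : ℝ) < K := Nat.cast_pos.mpr hK
  refine ⟨K, le_rfl, fun _ => (c / K) • v, fun _ => ⟨c / K, ?_, v, hv, rfl⟩, ?_⟩
  · rwa [abs_div, Nat.abs_cast, div_le_iff₀' hK']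
  · rw [Finset.sum_const, Finset.card_fin, ← Nat.cast_smul_eq_nsmul ℝ, smul_smul,
      mul_div_cancel₀ _ hK'.ne']

end IsSumOfAtMost

section NestedCommutators

variable {n : ℕ}

lemma matComm_sub (Z M N : Matrix (Fin n) (Fin n) ℂ) :
    matComm Z (M - N) = matComm Z M - matComm Z N := by
  simp only [matComm]; noncomm_ring

lemma matComm_matComm_sub_matComm_matComm (X Y N : Matrix (Fin n) (Fin n) ℂ) :
    matComm X (matComm Y N) - matComm Y (matComm X N) = matComm (matComm X Y) N := by
  simp only [matComm]; noncomm_ring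

lemma commSeq_append (X Y : Matrix (Fin n) (Fin n) ℂ) (S T : List Bool)
    (A : Matrix (Fin n) (Fin n) ℂ) :
    commSeq X Y (S ++ T) A = commSeq X Y S (commSeq X Y T A) := by
  induction S with
  | nil => rfl
  | cons b S ih => rw [List.cons_append, commSeq, ih, commSeq]

lemma commSeq_sub (X Y : Matrix (Fin n) (Fin n) ℂ) (S : List Bool)
    (A B : Matrix (Fin n) (Fin n) ℂ) :
    commSeq X Y S (A - B) = commSeq X Y S A - commSeq X Y S B := by
  induction S with
  | nil => rfl
  | cons b S ih => rw [commSeq, ih, matComm_sub, commSeq, commSeq]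

lemma commSeq_replicate (X Y : Matrix (Fin n) (Fin n) ℂ) (b : Bool) (a : ℕ)
    (A : Matrix (Fin n) (Fin n) ℂ) :
    commSeq X Y (List.replicate a b) A = nestedComm (if b then Y else X) A a := by
  induction a with
  | zero => rfl
  | succ a ih => rw [List.replicate_succ, commSeq, ih, nestedComm, matComm]

/-- The word `0^a 1^b`, encoding the nested commutator `[X, [Y, ·]_b]_a`. It is the normal form to
which the relation `[Y, [X, ·]] = [X, [Y, ·]] - [[X, Y], ·]` reduces any word. -/
def sortedWord (a b : ℕ) : List Bool := List.replicate a false ++ List.replicate b true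

lemma length_sortedWord (a b : ℕ) : (sortedWord a b).length = a + b := by
  simp [sortedWord]

lemma commSeq_sortedWord (X Y : Matrix (Fin n) (Fin n) ℂ) (a b : ℕ)
    (A : Matrix (Fin n) (Fin n) ℂ) :
    commSeq X Y (sortedWord a b) A = nestedComm X (nestedComm Y A b) a := by
  simp [sortedWord, commSeq_append, commSeq_replicate]

lemma mvCommPoly_eq_sum {f : MvPolynomial (Fin 2) ℝ} {s : Finset (Fin 2 →₀ ℕ)}
    (hf : f.support ⊆ s) (X Y A : Matrix (Fin n) (Fin n) ℂ) :
    mvCommPoly f X Y A = ∑ m ∈ s, f.coeff m • commSeq X Y (sortedWord (m 0) (m 1)) A := by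
  simp only [mvCommPoly, commSeq_sortedWord, Complex.coe_smul]
  refine Finset.sum_subset hf fun m _ hm => ?_
  rw [MvPolynomial.notMem_support_iff.mp hm, zero_smul]

lemma mvCommPoly_mul_conjTranspose_eq_zero {f g : MvPolynomial (Fin 2) ℝ} (hfg : f * g = 0)
    (X Y A B : Matrix (Fin n) (Fin n) ℂ) :
    mvCommPoly f X Y A * (mvCommPoly g X Y B)ᴴ = 0 := by
  rcases mul_eq_zero.mp hfg with rfl | rfl <;> simp [mvCommPoly]

end NestedCommutators

section TracePairing

variable {n : ℕ} {X Y A B ρ : Matrix (Fin n) (Fin n) ℂ} {D : ℕ}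

/-- The sesquilinear form `(M, N) ↦ tr(M N† ρ)`, in which both the quantity to be estimated and
all the error terms are expressed. -/
noncomputable def tracePairing (ρ M N : Matrix (Fin n) (Fin n) ℂ) : ℂ :=
  Matrix.trace (M * Nᴴ * ρ)

lemma tracePairing_sub_right (ρ M N N' : Matrix (Fin n) (Fin n) ℂ) :
    tracePairing ρ M (N - N') = tracePairing ρ M N - tracePairing ρ M N' := by
  simp only [tracePairing, Matrix.conjTranspose_sub, Matrix.mul_sub, Matrix.sub_mul,
    Matrix.trace_sub]

lemma tracePairing_sum_smul_sum_smul {ι κ : Type*} (ρ : Matrix (Fin n) (Fin n) ℂ)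
    (s : Finset ι) (t : Finset κ) (a : ι → ℝ) (b : κ → ℝ)
    (M : ι → Matrix (Fin n) (Fin n) ℂ) (N : κ → Matrix (Fin n) (Fin n) ℂ) :
    tracePairing ρ (∑ i ∈ s, a i • M i) (∑ j ∈ t, b j • N j) =
      ∑ i ∈ s, ∑ j ∈ t, (a i * b j) • tracePairing ρ (M i) (N j) := by
  rw [tracePairing, Matrix.conjTranspose_sum, Finset.sum_mul_sum]
  simp only [tracePairing, Matrix.conjTranspose_smul, star_trivial, smul_mul_smul_comm,
    Finset.sum_mul, Matrix.smul_mul, Matrix.trace_sum, Matrix.trace_smul]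

lemma tracePairing_matComm_right_sub_left {Z : Matrix (Fin n) (Fin n) ℂ} (hZ : Z.IsHermitian)
    (ρ M N : Matrix (Fin n) (Fin n) ℂ) :
    tracePairing ρ M (matComm Z N) - tracePairing ρ (matComm Z M) N =
      tracePairing (matComm Z ρ) M N := by
  have hcycle : Matrix.trace (M * Nᴴ * ρ * Z) = Matrix.trace (Z * M * Nᴴ * ρ) := by
    rw [Matrix.trace_mul_comm]; simp only [mul_assoc]
  simp only [tracePairing, matComm, Matrix.conjTranspose_sub, Matrix.conjTranspose_mul, hZ.eq,
    mul_sub, sub_mul, Matrix.trace_sub, ← mul_assoc, hcycle]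
  ring

lemma tracePairing_commSeq_swap (U T : List Bool) :
    tracePairing ρ A (commSeq X Y (U ++ false :: true :: T) B) -
        tracePairing ρ A (commSeq X Y (U ++ true :: false :: T) B) =
      tracePairing ρ A (commSeq X Y U (matComm (matComm X Y) (commSeq X Y T B))) := by
  simp [commSeq_append, ← tracePairing_sub_right, ← commSeq_sub, commSeq,
    matComm_matComm_sub_matComm_matComm]

/-- The traces in the three forms of error term attached to the words `S` and `T`, without sign and
factorial. -/
def errorTraces (X Y A B ρ : Matrix (Fin n) (Fin n) ℂ) (S T : List Bool) : Set ℂ :=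
  {tracePairing (matComm X ρ) (commSeq X Y S A) (commSeq X Y T B),
    tracePairing (matComm Y ρ) (commSeq X Y S A) (commSeq X Y T B),
    tracePairing ρ A (commSeq X Y S (matComm (matComm X Y) (commSeq X Y T B)))}

/-- The error traces whose words have total length less than `D`. Rearranging a product of
commutators of total length `D` creates errors of this kind, as each of them uses up a letter. -/
def errorTracesBelow (X Y A B ρ : Matrix (Fin n) (Fin n) ℂ) (D : ℕ) : Set ℂ :=
  {v | ∃ S T : List Bool, S.length + T.length < D ∧ v ∈ errorTraces X Y A B ρ S T}

lemma isSumOfAtMost_moveRight (hX : X.IsHermitian) (hY : Y.IsHermitian) (S T : List Bool)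
    (hD : S.length + T.length ≤ D) :
    IsSumOfAtMost S.length (errorTracesBelow X Y A B ρ D)
      (tracePairing ρ A (commSeq X Y (S.reverse ++ T) B) -
        tracePairing ρ (commSeq X Y S A) (commSeq X Y T B)) := by
  induction S generalizing T with
  | nil => simpa [commSeq] using IsSumOfAtMost.zero _ _
  | cons b S ih =>
    rw [List.length_cons] at hD
    have hrest := ih (b :: T) (by rw [List.length_cons]; omega)
    have hfirst : tracePairing ρ (commSeq X Y S A) (commSeq X Y (b :: T) B) -
        tracePairing ρ (commSeq X Y (b :: S) A) (commSeq X Y T B) ∈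
          errorTracesBelow X Y A B ρ D := by
      refine ⟨S, T, by omega, ?_⟩
      cases b <;>
        simp [commSeq, errorTraces, tracePairing_matComm_right_sub_left, hX, hY]
    simpa [add_comm 1] using (IsSumOfAtMost.of_mem hfirst).trans hrest

lemma isSumOfAtMost_swap (U T : List Bool) (hD : U.length + T.length < D) :
    IsSumOfAtMost 1 (errorTracesBelow X Y A B ρ D)
      (tracePairing ρ A (commSeq X Y (U ++ false :: true :: T) B) -
        tracePairing ρ A (commSeq X Y (U ++ true :: false :: T) B)) :=
  .of_mem ⟨U, T, hD, by simp [tracePairing_commSeq_swap, errorTraces]⟩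

lemma isSumOfAtMost_pass (a : ℕ) (U T : List Bool) (hD : U.length + a + T.length < D) :
    IsSumOfAtMost a (errorTracesBelow X Y A B ρ D)
      (tracePairing ρ A (commSeq X Y (U ++ (List.replicate a false ++ true :: T)) B) -
        tracePairing ρ A (commSeq X Y (U ++ true :: (List.replicate a false ++ T)) B)) := by
  induction a generalizing U with
  | zero => simpa using IsSumOfAtMost.zero _ _
  | succ a ih =>
    have hfirst := isSumOfAtMost_swap (X := X) (Y := Y) (A := A) (B := B) (ρ := ρ) (D := D) U
      (List.replicate a false ++ T) (by grind)
    have hrest : IsSumOfAtMost a (errorTracesBelow X Y A B ρ D)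
        (tracePairing ρ A (commSeq X Y (U ++ false :: (List.replicate a false ++ true :: T)) B) -
          tracePairing ρ A
            (commSeq X Y (U ++ false :: true :: (List.replicate a false ++ T)) B)) := by
      simpa using ih (U ++ [false]) (by grind)
    simpa [List.replicate_succ, add_comm 1] using hfirst.trans hrest

lemma isSumOfAtMost_sort (W U : List Bool) (hD : U.length + W.length ≤ D) :
    IsSumOfAtMost (W.count false * W.count true) (errorTracesBelow X Y A B ρ D)
      (tracePairing ρ A (commSeq X Y (U ++ sortedWord (W.count false) (W.count true)) B) -
        tracePairing ρ A (commSeq X Y (U ++ W) B)) := by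
  induction W generalizing U with
  | nil => simpa [sortedWord] using IsSumOfAtMost.zero _ _
  | cons b W ih =>
    rw [List.length_cons] at hD
    have htail : IsSumOfAtMost (W.count false * W.count true) (errorTracesBelow X Y A B ρ D)
        (tracePairing ρ A (commSeq X Y (U ++ b :: sortedWord (W.count false) (W.count true)) B) -
          tracePairing ρ A (commSeq X Y (U ++ b :: W) B)) := by
      simpa using ih (U ++ [b]) (by grind)
    cases b with
    | false =>
      simpa [sortedWord, List.replicate_succ] using
        htail.mono (Nat.mul_le_mul_right _ (Nat.le_succ (W.count false)))
    | true =>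
      have hhead := isSumOfAtMost_pass (X := X) (Y := Y) (A := A) (B := B) (ρ := ρ) (D := D)
        (W.count false) U (List.replicate (W.count true) true) (by grind)
      simpa [sortedWord, List.replicate_succ, mul_add] using htail.trans hhead

lemma isSumOfAtMost_normalize (hX : X.IsHermitian) (hY : Y.IsHermitian) (a b a' b' : ℕ) :
    IsSumOfAtMost (a + b + (a + a') * (b + b'))
      (errorTracesBelow X Y A B ρ (a + b + (a' + b')))
      (tracePairing ρ A (commSeq X Y (sortedWord (a + a') (b + b')) B) -
        tracePairing ρ (commSeq X Y (sortedWord a b) A) (commSeq X Y (sortedWord a' b') B)) := by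
  have hmove := isSumOfAtMost_moveRight (A := A) (B := B) (ρ := ρ) (D := a + b + (a' + b')) hX hY
    (sortedWord a b) (sortedWord a' b') (by simp [length_sortedWord])
  have hsort := isSumOfAtMost_sort (X := X) (Y := Y) (A := A) (B := B) (ρ := ρ)
    (D := a + b + (a' + b')) ((sortedWord a b).reverse ++ sortedWord a' b') []
    (by simp [length_sortedWord])
  rw [length_sortedWord] at hmove
  refine hmove.trans ?_
  simpa [sortedWord, List.count_replicate] using hsort

end TracePairing

section Coefficients

variable {ι σ R : Type*} [Fintype ι] [CommSemiring R]

/-- The coefficient of `x^p ⊗ x^q` in `∑ i, P i ⊗ Q i`. -/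
def tensorCoeff (P Q : ι → MvPolynomial σ R) (p q : σ →₀ ℕ) : R :=
  ∑ i, (P i).coeff p * (Q i).coeff q

lemma sum_tensorCoeff_smul_add_eq_zero {M : Type*} [AddCommMonoid M] [Module R M]
    {P Q : ι → MvPolynomial σ R} {s t : Finset (σ →₀ ℕ)} (hP : ∀ i, (P i).support ⊆ s)
    (hQ : ∀ i, (Q i).support ⊆ t) (hid : ∑ i, P i * Q i = 0) (u : (σ →₀ ℕ) → M) :
    ∑ p ∈ s, ∑ q ∈ t, tensorCoeff P Q p q • u (p + q) = 0 := by
  let L : MvPolynomial σ R →ₗ[R] M := (MvPolynomial.basisMonomials σ R).constr R u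
  have hL (m : σ →₀ ℕ) (r : R) : L (MvPolynomial.monomial m r) = r • u m := by
    have hm : MvPolynomial.monomial m r = r • MvPolynomial.basisMonomials σ R m := by
      simp [MvPolynomial.smul_monomial]
    rw [hm, map_smul, Module.Basis.constr_basis]
  have hexpand {f : MvPolynomial σ R} {s : Finset (σ →₀ ℕ)} (hf : f.support ⊆ s) :
      f = ∑ m ∈ s, MvPolynomial.monomial m (f.coeff m) := by
    conv_lhs => rw [f.as_sum]
    refine Finset.sum_subset hf fun m _ hm => ?_
    rw [MvPolynomial.notMem_support_iff.mp hm, map_zero]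
  have hmul (i : ι) : L (P i * Q i) =
      ∑ p ∈ s, ∑ q ∈ t, ((P i).coeff p * (Q i).coeff q) • u (p + q) := by
    conv_lhs => rw [hexpand (hP i), hexpand (hQ i), Finset.sum_mul_sum]
    simp only [map_sum, MvPolynomial.monomial_mul, hL]
  calc ∑ p ∈ s, ∑ q ∈ t, tensorCoeff P Q p q • u (p + q)
      = ∑ i, L (P i * Q i) := by
        simp only [hmul, tensorCoeff, Finset.sum_smul, Finset.sum_comm (γ := ι)]
    _ = 0 := by rw [← map_sum, hid, map_zero]

lemma trace_sum_mvCommPoly_mul_eq {n : ℕ} {P Q : ι → MvPolynomial (Fin 2) ℝ}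
    {s t : Finset (Fin 2 →₀ ℕ)} (hP : ∀ i, (P i).support ⊆ s) (hQ : ∀ i, (Q i).support ⊆ t)
    (X Y A B ρ : Matrix (Fin n) (Fin n) ℂ) :
    Matrix.trace ((∑ i, mvCommPoly (P i) X Y A * (mvCommPoly (Q i) X Y B)ᴴ) * ρ) =
      ∑ p ∈ s, ∑ q ∈ t, tensorCoeff P Q p q •
        tracePairing ρ (commSeq X Y (sortedWord (p 0) (p 1)) A)
          (commSeq X Y (sortedWord (q 0) (q 1)) B) := by
  calc Matrix.trace ((∑ i, mvCommPoly (P i) X Y A * (mvCommPoly (Q i) X Y B)ᴴ) * ρ)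
      = ∑ i, tracePairing ρ (mvCommPoly (P i) X Y A) (mvCommPoly (Q i) X Y B) := by
        rw [Finset.sum_mul, Matrix.trace_sum]; rfl
    _ = _ := by
        simp only [mvCommPoly_eq_sum (hP _), mvCommPoly_eq_sum (hQ _),
          tracePairing_sum_smul_sum_smul, tensorCoeff, Finset.sum_smul, Finset.sum_comm (γ := ι)]

end Coefficients

section Bounds

lemma monomialDeg_fin_two (m : Fin 2 →₀ ℕ) : monomialDeg m = m 0 + m 1 := by
  simp [monomialDeg, Finsupp.sum_fintype]

/-- The exponents of the bivariate monomials of total degree at most `d`. -/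
noncomputable def exponentsLE (d : ℕ) : Finset (Fin 2 →₀ ℕ) :=
  ((Finset.range (d + 1) ×ˢ Finset.range (d + 1)).filter fun p => p.1 + p.2 ≤ d).map
    (finTwoArrowEquiv' ℕ).symm.toEmbedding

lemma mem_exponentsLE {d : ℕ} {m : Fin 2 →₀ ℕ} : m ∈ exponentsLE d ↔ m 0 + m 1 ≤ d := by
  simp only [exponentsLE, Finset.mem_map_equiv, Equiv.symm_symm, finTwoArrowEquiv'_apply,
    Finset.mem_filter, Finset.mem_product, Finset.mem_range]
  omega

lemma MvBounded.support_subset_exponentsLE {d : ℕ} {C : ℝ} {f : MvPolynomial (Fin 2) ℝ}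
    (hf : MvBounded d C f) : f.support ⊆ exponentsLE d := fun m hm => by
  rw [mem_exponentsLE, ← monomialDeg_fin_two]
  exact (MvPolynomial.le_totalDegree hm).trans hf.1

lemma card_exponentsLE_le (d : ℕ) : (exponentsLE d).card ≤ (d + 1) ^ 2 := by
  rw [exponentsLE, Finset.card_map]
  refine (Finset.card_filter_le _ _).trans_eq ?_
  rw [Finset.card_product, Finset.card_range, sq]

lemma MvBounded.abs_tensorCoeff_le {ι σ : Type*} [Fintype ι] {d : ℕ} {C : ℝ}
    {P Q : ι → MvPolynomial σ ℝ} (hP : ∀ i, MvBounded d C (P i)) (hQ : ∀ i, MvBounded d C (Q i))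
    {p q : σ →₀ ℕ} (hp : monomialDeg p ≤ d) (hq : monomialDeg q ≤ d) :
    |tensorCoeff P Q p q| ≤ Fintype.card ι *
      (C / (monomialDeg p).factorial * (C / (monomialDeg q).factorial)) := by
  rw [← nsmul_eq_mul, ← Finset.card_univ]
  refine (Finset.abs_sum_le_sum_abs _ _).trans (Finset.sum_le_card_nsmul _ _ _ fun i _ => ?_)
  rw [abs_mul]
  exact mul_le_mul ((hP i).2 p hp) ((hQ i).2 q hq) (abs_nonneg _)
    ((abs_nonneg _).trans ((hP i).2 p hp))

lemma four_mul_factorial_le {d e f ℓ : ℕ} (he : e ≤ d) (hf : f ≤ d) (hℓ : ℓ < e + f) :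
    4 * ℓ.factorial ≤ 2 ^ (2 * d) * (e.factorial * f.factorial) := by
  obtain ⟨m, hm⟩ : ∃ m, e + f = m + 1 := Nat.exists_eq_add_one.mpr (by omega)
  have hsucc : (m + 1).factorial ≤ 2 ^ m * (e.factorial * f.factorial) := by
    rw [← hm, ← Nat.add_choose_mul_factorial_mul_factorial, mul_assoc, hm]
    exact Nat.mul_le_mul_right _ (Nat.choose_succ_le_two_pow m f)
  have hpow : 4 * 2 ^ m ≤ (m + 1) * 2 ^ (2 * d) := by
    rcases m.eq_zero_or_pos with rfl | hm0
    · simpa using Nat.pow_le_pow_right two_pos (show 2 ≤ 2 * d by omega)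
    · calc 4 * 2 ^ m = 2 * 2 ^ (m + 1) := by ring
        _ ≤ (m + 1) * 2 ^ (2 * d) := by gcongr <;> omega
  refine Nat.le_of_mul_le_mul_left ?_ m.succ_pos
  calc (m + 1) * (4 * ℓ.factorial) ≤ (m + 1) * (4 * m.factorial) := by gcongr; omega
    _ = 4 * (m + 1).factorial := by rw [Nat.factorial_succ]; ring
    _ ≤ 4 * 2 ^ m * (e.factorial * f.factorial) := by rw [mul_assoc]; gcongr
    _ ≤ (m + 1) * 2 ^ (2 * d) * (e.factorial * f.factorial) := by gcongr
    _ = (m + 1) * (2 ^ (2 * d) * (e.factorial * f.factorial)) := mul_assoc _ _ _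

lemma sum_exponentsLE_le (d : ℕ) :
    ∑ p ∈ exponentsLE d, ∑ q ∈ exponentsLE d, (p 0 + p 1 + (p 0 + q 0) * (p 1 + q 1)) ≤
      8 * d ^ 6 := by
  rcases Nat.lt_or_ge d 2 with hd | hd
  · simp only [exponentsLE, Finset.sum_map, Equiv.coe_toEmbedding, finTwoArrowEquiv'_symm_apply]
    interval_cases d <;> decide
  have hterm : ∀ p ∈ exponentsLE d, ∀ q ∈ exponentsLE d,
      p 0 + p 1 + (p 0 + q 0) * (p 1 + q 1) ≤ d * (d + 1) := fun p hp q hq => by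
    rw [mem_exponentsLE] at hp hq
    have hprod : 4 * ((p 0 + q 0) * (p 1 + q 1)) ≤ (2 * d) ^ 2 :=
      (mul_assoc 4 _ _).ge.trans ((four_mul_le_sq_add _ _).trans
        (Nat.pow_le_pow_left (by omega) 2))
    linarith
  have hpow : (d + 1) ^ 5 ≤ 8 * d ^ 5 := by
    have h : 2 * (d + 1) ≤ 3 * d := by omega
    have := Nat.pow_le_pow_left h 5
    rw [mul_pow, mul_pow] at this
    omega
  calc ∑ p ∈ exponentsLE d, ∑ q ∈ exponentsLE d, (p 0 + p 1 + (p 0 + q 0) * (p 1 + q 1))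
      ≤ ∑ _p ∈ exponentsLE d, ∑ _q ∈ exponentsLE d, d * (d + 1) :=
        Finset.sum_le_sum fun p hp => Finset.sum_le_sum (hterm p hp)
    _ = (exponentsLE d).card * ((exponentsLE d).card * (d * (d + 1))) := by
        simp only [Finset.sum_const, smul_eq_mul]
    _ ≤ (d + 1) ^ 2 * ((d + 1) ^ 2 * (d * (d + 1))) := by
        gcongr <;> exact card_exponentsLE_le d
    _ = d * (d + 1) ^ 5 := by ring
    _ ≤ d * (8 * d ^ 5) := by gcongr
    _ = 8 * d ^ 6 := by ring

end Bounds

section Main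

variable {n : ℕ} {X Y A B ρ : Matrix (Fin n) (Fin n) ℂ}

/-- The error traces for words of total length `ℓ ≤ 2 * d`, divided by `ℓ!`. These are the `Z_i` of
the theorem, with the sign `+`; other signs are absorbed in the coefficients. -/
def normalizedErrors (X Y A B ρ : Matrix (Fin n) (Fin n) ℂ) (d : ℕ) : Set ℂ :=
  {z | ∃ S T : List Bool, S.length + T.length ≤ 2 * d ∧
    ∃ v ∈ errorTraces X Y A B ρ S T, z = 1 / ((S.length + T.length).factorial : ℂ) * v}

lemma isSumOfAtMost_smul_errorTrace {d e f k K : ℕ} {C c : ℝ} {v : ℂ} (he : e ≤ d) (hf : f ≤ d)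
    (hkK : k ≤ 4 * K) (hc : |c| ≤ k * (C / e.factorial * (C / f.factorial)))
    (hv : v ∈ errorTracesBelow X Y A B ρ (e + f)) :
    IsSumOfAtMost K (boundedMultiples (C ^ 2 * 2 ^ (2 * d)) (normalizedErrors X Y A B ρ d))
      (c • v) := by
  obtain ⟨S, T, hℓ, hv⟩ := hv
  set ℓ := S.length + T.length
  have hfact : (4 * ℓ.factorial : ℝ) ≤ 2 ^ (2 * d) * (e.factorial * f.factorial) := by
    exact_mod_cast four_mul_factorial_le he hf hℓ
  have hkK' : (k : ℝ) ≤ 4 * K := by exact_mod_cast hkK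
  have hbound : |c * ℓ.factorial| ≤ K * (C ^ 2 * 2 ^ (2 * d)) := by
    calc |c * ℓ.factorial| = |c| * ℓ.factorial := by rw [abs_mul, Nat.abs_cast]
      _ ≤ 4 * K * (C / e.factorial * (C / f.factorial)) * ℓ.factorial := by
          have : 0 ≤ C / e.factorial * (C / f.factorial) := by
            rw [div_mul_div_comm, ← sq]; positivity
          gcongr
          exact hc.trans (by gcongr)
      _ = K * C ^ 2 / (e.factorial * f.factorial) * (4 * ℓ.factorial) := by field_simp
      _ ≤ K * C ^ 2 / (e.factorial * f.factorial) *
            (2 ^ (2 * d) * (e.factorial * f.factorial)) := by gcongr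
      _ = K * (C ^ 2 * 2 ^ (2 * d)) := by field_simp
  have hsplit : c • v = (c * ℓ.factorial) • (1 / (ℓ.factorial : ℂ) * v) := by
    have : (ℓ.factorial : ℂ) ≠ 0 := Nat.cast_ne_zero.mpr ℓ.factorial_ne_zero
    simp only [Complex.real_smul, Complex.ofReal_mul, Complex.ofReal_natCast]
    field_simp
  rw [hsplit]
  exact .smul_boundedMultiples hbound ⟨S, T, by omega, v, hv, rfl⟩

lemma isSumOfAtMost_trace {ι : Type*} [Fintype ι] {d K : ℕ} {C : ℝ}
    {P Q : ι → MvPolynomial (Fin 2) ℝ} (hP : ∀ i, MvBounded d C (P i))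
    (hQ : ∀ i, MvBounded d C (Q i)) (hid : ∑ i, P i * Q i = 0) (hX : X.IsHermitian)
    (hY : Y.IsHermitian) (hK : Fintype.card ι ≤ 4 * K) :
    IsSumOfAtMost (8 * d ^ 6 * K)
      (boundedMultiples (C ^ 2 * 2 ^ (2 * d)) (normalizedErrors X Y A B ρ d))
      (Matrix.trace ((∑ i, mvCommPoly (P i) X Y A * (mvCommPoly (Q i) X Y B)ᴴ) * ρ)) := by
  have hPs i := (hP i).support_subset_exponentsLE
  have hQs i := (hQ i).support_subset_exponentsLE
  have hzero := sum_tensorCoeff_smul_add_eq_zero hPs hQs hid fun m =>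
    tracePairing ρ A (commSeq X Y (sortedWord (m 0) (m 1)) B)
  rw [trace_sum_mvCommPoly_mul_eq hPs hQs, ← sub_zero (∑ p ∈ _, _), ← hzero]
  simp only [← Finset.sum_sub_distrib, ← smul_sub]
  have hcount := Nat.mul_le_mul_right K (sum_exponentsLE_le d)
  simp only [Finset.sum_mul] at hcount
  refine IsSumOfAtMost.mono (.sum fun p hp => .sum fun q hq => ?_) hcount
  rw [mem_exponentsLE] at hp hq
  rw [← neg_sub, smul_neg, ← neg_smul]
  refine (isSumOfAtMost_normalize hX hY _ _ _ _).smul fun v hv =>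
    isSumOfAtMost_smul_errorTrace hp hq hK ?_ hv
  simpa only [abs_neg, monomialDeg_fin_two] using MvBounded.abs_tensorCoeff_le hP hQ
    (by rwa [monomialDeg_fin_two]) (by rwa [monomialDeg_fin_two])

end Main

/-- **Polynomial identities to nested commutator identities** (Theorem 3.9). Given
`(d, C)`-bounded real bivariate polynomials `p₁, q₁, …, p_k, q_k` with
`∑ pᵢ qᵢ = 0` as polynomials, and Hermitian `X, Y` with arbitrary `ρ, A, B`, the trace
`tr((∑ᵢ pᵢ(X,Y|A) qᵢ(X,Y|B)†) ρ)` equals `∑_{i=1}^t cᵢ Zᵢ` with `t ≤ 4kd⁶`, real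
coefficients `|cᵢ| ≤ C² 2^{2d}`, and each `Zᵢ` of one of the three stated error forms. -/
theorem polynomial_identity_to_commutators (n k d : ℕ) (C : ℝ)
    (P Q : Fin k → MvPolynomial (Fin 2) ℝ)
    (hP : ∀ i, MvBounded d C (P i)) (hQ : ∀ i, MvBounded d C (Q i))
    (hid : ∑ i, P i * Q i = 0)
    (X Y A B ρ : Matrix (Fin n) (Fin n) ℂ)
    (hX : X.IsHermitian) (hY : Y.IsHermitian) :
    ∃ t : ℕ, t ≤ 4 * k * d ^ 6 ∧
      ∃ (c : Fin t → ℝ) (Z : Fin t → ℂ),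
        (∀ i, |c i| ≤ C ^ 2 * 2 ^ (2 * d)) ∧
        (Matrix.trace ((∑ i, mvCommPoly (P i) X Y A * (mvCommPoly (Q i) X Y B)ᴴ) * ρ)
          = ∑ i, ((c i : ℝ) : ℂ) * Z i) ∧
        (∀ i : Fin t, ∃ (s : ℂ) (Sl Tl : List Bool), (s = 1 ∨ s = -1) ∧
          Sl.length + Tl.length ≤ 2 * d ∧
          (Z i = (s / (Nat.factorial (Sl.length + Tl.length) : ℂ)) *
              Matrix.trace (commSeq X Y Sl A * (commSeq X Y Tl B)ᴴ * matComm X ρ) ∨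
           Z i = (s / (Nat.factorial (Sl.length + Tl.length) : ℂ)) *
              Matrix.trace (commSeq X Y Sl A * (commSeq X Y Tl B)ᴴ * matComm Y ρ) ∨
           Z i = (s / (Nat.factorial (Sl.length + Tl.length) : ℂ)) *
              Matrix.trace
                (A * (commSeq X Y Sl (matComm (matComm X Y) (commSeq X Y Tl B)))ᴴ * ρ))) := by
  suffices h : IsSumOfAtMost (4 * k * d ^ 6)
      (boundedMultiples (C ^ 2 * 2 ^ (2 * d)) (normalizedErrors X Y A B ρ d))
      (Matrix.trace ((∑ i, mvCommPoly (P i) X Y A * (mvCommPoly (Q i) X Y B)ᴴ) * ρ)) by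
    obtain ⟨t, ht, w, hw, hsum⟩ := h
    choose c hc Z hZ hwZ using hw
    refine ⟨t, ht, c, Z, hc, by simp only [← hsum, hwZ, Complex.real_smul], fun i => ?_⟩
    obtain ⟨S, T, hlen, v, hv, hZv⟩ := hZ i
    refine ⟨1, S, T, .inl rfl, hlen, ?_⟩
    rw [hZv]
    exact hv.imp (congrArg _) (Or.imp (congrArg _) (congrArg _))
  obtain rfl | hk := eq_or_ne k 1
  · rw [Fin.sum_univ_one, mvCommPoly_mul_conjTranspose_eq_zero (by simpa using hid), zero_mul,
      Matrix.trace_zero]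
    exact .zero _ _
  · refine (isSumOfAtMost_trace hP hQ hid hX hY (K := k / 2) ?_).mono ?_
    · rw [Fintype.card_fin]; omega
    · calc 8 * d ^ 6 * (k / 2) = 4 * (2 * (k / 2)) * d ^ 6 := by ring
        _ ≤ 4 * k * d ^ 6 := by gcongr; exact Nat.mul_div_le k 2
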